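/- arXiv:0706.0075 — 4 statements merged into one kernel-verified Lean document; each statement's English description precedes it below -/
import Mathlib

section
/- Let L be a Lie algebra over a field F, let g, g₁, g₂ ∈ L, and let λ, μ₁, μ₂ ∈ F be pairwise distinct. Then (λ−μ₂)⁻¹ • ( (λ−μ₁)⁻¹ • ⁅⁅g,g₁⁆,g₂⁆ + (μ₂−μ₁)⁻¹ • ⁅g,⁅g₂,g₁⁆⁆ ) = (λ−μ₁)⁻¹ • ( (λ−μ₂)⁻¹ • ⁅⁅g,g₂⁆,g₁⁆ + (μ₁−μ₂)⁻¹ • ⁅g,⁅g₁,g₂⁆⁆ ). -/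
/-!
Skew-symmetry turns every double bracket into an iterated left action on `g`:
`⁅⁅g, g₁⁆, g₂⁆ = ⁅g₂, ⁅g₁, g⁆⁆` and `⁅g, ⁅g₂, g₁⁆⁆ = ⁅⁅g₁, g₂⁆, g⁆`. By the Jacobi identity both
sides are then combinations of `⁅g₁, ⁅g₂, g⁆⁆` and `⁅g₂, ⁅g₁, g⁆⁆`, whose coefficients agree by the
partial-fraction identity
`1 / ((λ - μ₁) (λ - μ₂)) = 1 / ((λ - μ₁) (μ₁ - μ₂)) + 1 / ((λ - μ₂) (μ₂ - μ₁))`.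
-/

theorem lie_lie_eq_lie_lie_swap {L : Type*} [LieRing L] (x y z : L) :
    ⁅⁅x, y⁆, z⁆ = ⁅z, ⁅y, x⁆⁆ := by
  rw [← lie_skew, ← lie_skew x y, lie_neg, neg_neg]

section RingInverse

open scoped Ring

theorem ringInverse_neg {R : Type*} [Ring R] (a : R) : (-a)⁻¹ʳ = -a⁻¹ʳ := by
  by_cases ha : IsUnit a
  · obtain ⟨u, rfl⟩ := ha
    rw [← Units.val_neg, Ring.inverse_unit, Ring.inverse_unit, inv_neg, Units.val_neg]
  · rw [Ring.inverse_non_unit _ ha, Ring.inverse_non_unit _ (mt (IsUnit.neg_iff a).1 ha), neg_zero]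

theorem ringInverse_sub_mul_ringInverse_sub {R : Type*} [CommRing R] {x a b : R}
    (ha : IsUnit (x - a)) (hb : IsUnit (x - b)) (hab : IsUnit (a - b)) :
    (x - a)⁻¹ʳ * (x - b)⁻¹ʳ = (x - a)⁻¹ʳ * (a - b)⁻¹ʳ + (x - b)⁻¹ʳ * (b - a)⁻¹ʳ := by
  calc (x - a)⁻¹ʳ * (x - b)⁻¹ʳ
      = ((x - a)⁻¹ʳ - (x - b)⁻¹ʳ) * (a - b)⁻¹ʳ := by
        rw [Ring.inverse_sub_inverse (iff_of_true ha hb), sub_sub_sub_cancel_left, mul_right_comm,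
          Ring.mul_inverse_cancel_right _ _ hab]
    _ = (x - a)⁻¹ʳ * (a - b)⁻¹ʳ + (x - b)⁻¹ʳ * (b - a)⁻¹ʳ := by
        rw [← neg_sub a b, ringInverse_neg]
        ring

end RingInverse

section LieModule

open scoped Ring

variable {R L M : Type*} [CommRing R] [LieRing L] [AddCommGroup M] [Module R M]
  [LieRingModule L M]

theorem smul_lie_lie_add_smul_lie_comm {p q r s : R} (h : p * q = p * r + q * s)
    (x y : L) (m : M) :
    q • (p • ⁅y, ⁅x, m⁆⁆ + s • ⁅⁅x, y⁆, m⁆) = p • (q • ⁅x, ⁅y, m⁆⁆ + r • ⁅⁅y, x⁆, m⁆) := by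
  rw [lie_lie x y m, lie_lie y x m]
  linear_combination (norm := module) h • (⁅y, ⁅x, m⁆⁆ - ⁅x, ⁅y, m⁆⁆)

theorem stmt_1_general (x y : L) (m : M) {lam μ₁ μ₂ : R}
    (h₁ : IsUnit (lam - μ₁)) (h₂ : IsUnit (lam - μ₂)) (h₃ : IsUnit (μ₁ - μ₂)) :
    (lam - μ₂)⁻¹ʳ • ((lam - μ₁)⁻¹ʳ • ⁅y, ⁅x, m⁆⁆ + (μ₂ - μ₁)⁻¹ʳ • ⁅⁅x, y⁆, m⁆) =
      (lam - μ₁)⁻¹ʳ • ((lam - μ₂)⁻¹ʳ • ⁅x, ⁅y, m⁆⁆ + (μ₁ - μ₂)⁻¹ʳ • ⁅⁅y, x⁆, m⁆) :=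
  smul_lie_lie_add_smul_lie_comm (ringInverse_sub_mul_ringInverse_sub h₁ h₂ h₃) x y m

end LieModule

theorem stmt_1 {F : Type*} [Field F] {L : Type*} [LieRing L] [LieAlgebra F L]
    (g g₁ g₂ : L) (lam μ₁ μ₂ : F)
    (h₁ : lam ≠ μ₁) (h₂ : lam ≠ μ₂) (h₃ : μ₁ ≠ μ₂) :
    (lam - μ₂)⁻¹ •
        ((lam - μ₁)⁻¹ • ⁅⁅g, g₁⁆, g₂⁆ + (μ₂ - μ₁)⁻¹ • ⁅g, ⁅g₂, g₁⁆⁆) =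
      (lam - μ₁)⁻¹ •
        ((lam - μ₂)⁻¹ • ⁅⁅g, g₂⁆, g₁⁆ + (μ₁ - μ₂)⁻¹ • ⁅g, ⁅g₁, g₂⁆⁆) := by
  simpa only [Ring.inverse_eq_inv', lie_lie_eq_lie_lie_swap] using
    stmt_1_general g₁ g₂ g (sub_ne_zero.2 h₁).isUnit (sub_ne_zero.2 h₂).isUnit
      (sub_ne_zero.2 h₃).isUnit
end

section
/- Fix μ ∈ ℝ. Let a, b, c : ℝ × ℝ → ℝ (arguments (τ, λ)) be differentiable in τ, and for functions f, g of this kind define {f,g}(τ,λ) = ( f(τ,μ)·g(τ,λ) − g(τ,μ)·f(τ,λ) ) / (λ−μ) for λ ≠ μ. Suppose that for all τ and all λ ≠ μ: ∂_τ a = 2{a,b}, ∂_τ c = 2{b,c}, ∂_τ b = {a,c}. Then for all τ and all λ ≠ μ, ∂_τ ( b(τ,λ)² − a(τ,λ)·c(τ,λ) ) = 0. -/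
/-- The bracket `{f,g}(τ,λ) = (f(τ,μ)g(τ,λ) − g(τ,μ)f(τ,λ))/(λ−μ)`. -/
noncomputable def pbr (μ : ℝ) (f g : ℝ × ℝ → ℝ) (τ l : ℝ) : ℝ :=
  (f (τ, μ) * g (τ, l) - g (τ, μ) * f (τ, l)) / (l - μ)

/-!
The determinant with rows `(a, b, c)(τ,λ)`, `(a, b, c)(τ,λ)`, `(a, b, c)(τ,μ)` vanishes. Divided by
`λ - μ`, its expansion along the first row is the Plücker relation `b {a,c} = {a,b} c + a {b,c}` at
`(τ,λ)`. Along the flow, twice this relation reads `∂_τ (b²) = ∂_τ (a c)`.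
-/

section Bracket

variable {T K : Type*} [Field K]

/-- The bracket `{f,g}(τ,λ)` of functions of a time `τ` in any type and a spectral parameter `λ` in
any field; over `ℝ` it is `pbr`. At `λ = μ` division by zero makes it `0`. -/
def spectralBracket (μ : K) (f g : T × K → K) (τ : T) (l : K) : K :=
  (f (τ, μ) * g (τ, l) - g (τ, μ) * f (τ, l)) / (l - μ)

theorem mul_spectralBracket_eq_add (μ : K) (a b c : T × K → K) (τ : T) (l : K) :
    b (τ, l) * spectralBracket μ a c τ l =
      spectralBracket μ a b τ l * c (τ, l) + a (τ, l) * spectralBracket μ b c τ l := by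
  simp only [spectralBracket]
  ring

end Bracket

theorem hasDerivAt_sq_sub_mul_zero {𝕜 A : Type*} [NontriviallyNormedField 𝕜]
    [NormedCommRing A] [NormedAlgebra 𝕜 A] {a b c : 𝕜 → A} {α β γ : A} {τ : 𝕜}
    (ha : HasDerivAt a (2 * α) τ) (hb : HasDerivAt b β τ) (hc : HasDerivAt c (2 * γ) τ)
    (h : b τ * β = α * c τ + a τ * γ) :
    HasDerivAt (fun t => b t ^ 2 - a t * c t) 0 τ := by
  have hsq : HasDerivAt (fun t => b t ^ 2) (2 * (b τ * β)) τ :=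
    (hb.fun_pow 2).congr_deriv (by push_cast; ring)
  have hmul : HasDerivAt (fun t => a t * c t) (2 * (α * c τ + a τ * γ)) τ :=
    (ha.fun_mul hc).congr_deriv (by ring)
  exact (hsq.fun_sub hmul).congr_deriv (by rw [h, sub_self])

theorem stmt_3_general {𝕜 K : Type*} [NontriviallyNormedField 𝕜] [NormedField K]
    [NormedAlgebra 𝕜 K] (μ : K) (a b c : 𝕜 × K → K)
    (ha : ∀ τ l, l ≠ μ → HasDerivAt (fun t => a (t, l)) (2 * spectralBracket μ a b τ l) τ)
    (hb : ∀ τ l, l ≠ μ → HasDerivAt (fun t => b (t, l)) (spectralBracket μ a c τ l) τ)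
    (hc : ∀ τ l, l ≠ μ → HasDerivAt (fun t => c (t, l)) (2 * spectralBracket μ b c τ l) τ) :
    ∀ τ l, l ≠ μ → HasDerivAt (fun t => b (t, l) ^ 2 - a (t, l) * c (t, l)) 0 τ :=
  fun τ l hl => hasDerivAt_sq_sub_mul_zero (ha τ l hl) (hb τ l hl) (hc τ l hl)
    (mul_spectralBracket_eq_add μ a b c τ l)

theorem stmt_3 (μ : ℝ) (a b c : ℝ × ℝ → ℝ)
    (ha : ∀ l : ℝ, Differentiable ℝ fun τ => a (τ, l))
    (hb : ∀ l : ℝ, Differentiable ℝ fun τ => b (τ, l))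
    (hc : ∀ l : ℝ, Differentiable ℝ fun τ => c (τ, l))
    (ha' : ∀ (τ l : ℝ), l ≠ μ →
      deriv (fun t => a (t, l)) τ = 2 * pbr μ a b τ l)
    (hc' : ∀ (τ l : ℝ), l ≠ μ →
      deriv (fun t => c (t, l)) τ = 2 * pbr μ b c τ l)
    (hb' : ∀ (τ l : ℝ), l ≠ μ →
      deriv (fun t => b (t, l)) τ = pbr μ a c τ l) :
    ∀ (τ l : ℝ), l ≠ μ →
      deriv (fun t => b (t, l) ^ 2 - a (t, l) * c (t, l)) τ = 0 := by
  intro τ l hl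
  exact (stmt_3_general μ a b c
    (fun τ l hl => (ha l τ).hasDerivAt.congr_deriv (ha' τ l hl))
    (fun τ l hl => (hb l τ).hasDerivAt.congr_deriv (hb' τ l hl))
    (fun τ l hl => (hc l τ).hasDerivAt.congr_deriv (hc' τ l hl)) τ l hl).deriv
end

section
/- Let n ∈ ℕ, let μ₁ ≠ μ₂ be real numbers, and let S : ℝ × ℝ → Matrix (Fin n) (Fin n) ℝ be twice continuously differentiable (entrywise) in its two arguments (τ₁, τ₂), satisfying (μ₁−μ₂) · ∂_{τ₁}∂_{τ₂} S = (∂_{τ₁}S)·(∂_{τ₂}S) − (∂_{τ₂}S)·(∂_{τ₁}S) everywhere. Then ∂_{τ₂} ( trace( (∂_{τ₁}S) · (∂_{τ₁}S) ) ) = 0 everywhere. -/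
open Matrix

/-! The equation is a Lax equation in `τ₂` for `L = ∂S/∂τ₁`: as mixed partials commute, it reads
`(μ₁ - μ₂) L' = [L, ∂S/∂τ₂]`. Hence `(μ₁ - μ₂) (tr L²)' = 2 tr ([L, ∂S/∂τ₂] L)`, and `tr ([L, B] L)`
vanishes for every `B` by cyclicity of the trace. -/

open Filter Topology

section LaxTrace

variable {l m R 𝕜 𝔸 : Type*} [Fintype l] [Fintype m]

theorem trace_commutator_mul_self [NonUnitalCommRing R] (A B : Matrix m m R) :
    ((A * B - B * A) * A).trace = 0 := by
  rw [Matrix.sub_mul, trace_sub, trace_mul_cycle A B A, trace_mul_cycle A A B, sub_self]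

variable [NontriviallyNormedField 𝕜]

theorem hasDerivAt_trace_mul [NormedRing 𝔸] [NormedAlgebra 𝕜 𝔸] {A : 𝕜 → Matrix l m 𝔸}
    {B : 𝕜 → Matrix m l 𝔸} {A' : Matrix l m 𝔸} {B' : Matrix m l 𝔸} {t : 𝕜}
    (hA : ∀ i j, HasDerivAt (fun t => A t i j) (A' i j) t)
    (hB : ∀ i j, HasDerivAt (fun t => B t i j) (B' i j) t) :
    HasDerivAt (fun t => (A t * B t).trace) ((A' * B t).trace + (A t * B').trace) t := by
  simp only [trace, diag, mul_apply, ← Finset.sum_add_distrib]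
  exact .fun_sum fun i _ => .fun_sum fun j _ => (hA i j).mul (hB j i)

theorem hasDerivAt_trace_mul_self_of_lax [NormedCommRing 𝔸] [NormedAlgebra 𝕜 𝔸]
    {L : 𝕜 → Matrix m m 𝔸} {L' B : Matrix m m 𝔸} {c t : 𝕜} (hc : c ≠ 0)
    (hL : ∀ i j, HasDerivAt (fun t => L t i j) (L' i j) t) (hlax : c • L' = L t * B - B * L t) :
    HasDerivAt (fun t => (L t * L t).trace) 0 t := by
  have htrace : (L' * L t).trace = 0 := by
    refine (smul_eq_zero_iff_right hc).mp ?_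
    rw [← trace_smul, ← Matrix.smul_mul, hlax, trace_commutator_mul_self]
  simpa only [trace_mul_comm (L t) L', htrace, add_zero] using hasDerivAt_trace_mul hL hL

end LaxTrace

section MixedPartials

variable {𝕜 E F : Type*} [NontriviallyNormedField 𝕜] [NormedAddCommGroup E] [NormedSpace 𝕜 E]
  [NormedAddCommGroup F] [NormedSpace 𝕜 F]

theorem hasDerivAt_comp_prodMk_left {f : 𝕜 × E → F} {p : 𝕜 × E} (hf : DifferentiableAt 𝕜 f p) :
    HasDerivAt (fun s => f (s, p.2)) (fderiv 𝕜 f p (1, 0)) p.1 :=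
  hf.hasFDerivAt.comp_hasDerivAt p.1 ((hasDerivAt_id p.1).prodMk (hasDerivAt_const p.1 p.2))

theorem hasDerivAt_comp_prodMk_right {f : E × 𝕜 → F} {p : E × 𝕜} (hf : DifferentiableAt 𝕜 f p) :
    HasDerivAt (fun t => f (p.1, t)) (fderiv 𝕜 f p (0, 1)) p.2 :=
  hf.hasFDerivAt.comp_hasDerivAt p.2 ((hasDerivAt_const p.2 p.1).prodMk (hasDerivAt_id p.2))

theorem differentiableAt_fderiv_of_contDiffAt {f : E → F} {x : E} (hf : ContDiffAt 𝕜 2 f x) :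
    DifferentiableAt 𝕜 (fderiv 𝕜 f) x :=
  (hf.fderiv_right (m := 1) (by norm_num)).differentiableAt one_ne_zero

theorem eventually_differentiableAt_of_contDiffAt {f : E → F} {x : E} (hf : ContDiffAt 𝕜 1 f x) :
    ∀ᶠ y in 𝓝 x, DifferentiableAt 𝕜 f y :=
  (hf.eventually (by simp)).mono fun _ hy => hy.differentiableAt one_ne_zero

variable {f : 𝕜 × 𝕜 → F} {p : 𝕜 × 𝕜}

theorem hasDerivAt_deriv_prodMk_right (hf : ContDiffAt 𝕜 2 f p) :
    HasDerivAt (fun s => deriv (fun t => f (s, t)) p.2)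
      (fderiv 𝕜 (fderiv 𝕜 f) p (1, 0) (0, 1)) p.1 := by
  have hfderiv : HasDerivAt (fun s => fderiv 𝕜 f (s, p.2) (0, 1))
      (fderiv 𝕜 (fderiv 𝕜 f) p (1, 0) (0, 1)) p.1 := by
    simpa using (hasDerivAt_comp_prodMk_left (differentiableAt_fderiv_of_contDiffAt hf)).clm_apply
      (hasDerivAt_const p.1 ((0 : 𝕜), (1 : 𝕜)))
  have hnhds : Tendsto (fun s => (s, p.2)) (𝓝 p.1) (𝓝 p) :=
    (Continuous.prodMk_left p.2).tendsto p.1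
  refine hfderiv.congr_of_eventuallyEq ?_
  have hdiff := eventually_differentiableAt_of_contDiffAt (hf.of_le one_le_two)
  filter_upwards [hnhds.eventually hdiff] with s hs
  exact (hasDerivAt_comp_prodMk_right hs).deriv

theorem hasDerivAt_deriv_prodMk_left (hf : ContDiffAt 𝕜 2 f p) :
    HasDerivAt (fun t => deriv (fun s => f (s, t)) p.1)
      (fderiv 𝕜 (fderiv 𝕜 f) p (0, 1) (1, 0)) p.2 := by
  have hfderiv : HasDerivAt (fun t => fderiv 𝕜 f (p.1, t) (1, 0))
      (fderiv 𝕜 (fderiv 𝕜 f) p (0, 1) (1, 0)) p.2 := by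
    simpa using (hasDerivAt_comp_prodMk_right (differentiableAt_fderiv_of_contDiffAt hf)).clm_apply
      (hasDerivAt_const p.2 ((1 : 𝕜), (0 : 𝕜)))
  have hnhds : Tendsto (fun t => (p.1, t)) (𝓝 p.2) (𝓝 p) :=
    (Continuous.prodMk_right p.1).tendsto p.2
  refine hfderiv.congr_of_eventuallyEq ?_
  have hdiff := eventually_differentiableAt_of_contDiffAt (hf.of_le one_le_two)
  filter_upwards [hnhds.eventually hdiff] with t ht
  exact (hasDerivAt_comp_prodMk_left ht).deriv

theorem hasDerivAt_deriv_prodMk_comm {k : WithTop ℕ∞} (hf : ContDiffAt 𝕜 k f p)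
    (hk : minSmoothness 𝕜 2 ≤ k) :
    HasDerivAt (fun t => deriv (fun s => f (s, t)) p.1)
      (deriv (fun s => deriv (fun t => f (s, t)) p.2) p.1) p.2 := by
  have hf₂ : ContDiffAt 𝕜 2 f p := hf.of_le (le_minSmoothness.trans hk)
  rw [(hasDerivAt_deriv_prodMk_right hf₂).deriv, hf.isSymmSndFDerivAt hk]
  exact hasDerivAt_deriv_prodMk_left hf₂

end MixedPartials

theorem stmt_4_general {𝕜 𝔸 m : Type*} [NontriviallyNormedField 𝕜] [NormedCommRing 𝔸]
    [NormedAlgebra 𝕜 𝔸] [Fintype m] {k : WithTop ℕ∞} (hk : minSmoothness 𝕜 2 ≤ k)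
    {μ₁ μ₂ : 𝕜} (hμ : μ₁ ≠ μ₂) {S : 𝕜 × 𝕜 → Matrix m m 𝔸} {p : 𝕜 × 𝕜}
    (hS : ∀ i j, ContDiffAt 𝕜 k (fun q => S q i j) p)
    (heq : (μ₁ - μ₂) •
          (Matrix.of fun i j => deriv (fun s => deriv (fun t => S (s, t) i j) p.2) p.1) =
        (Matrix.of fun i j => deriv (fun s => S (s, p.2) i j) p.1) *
            (Matrix.of fun i j => deriv (fun t => S (p.1, t) i j) p.2) -
          (Matrix.of fun i j => deriv (fun t => S (p.1, t) i j) p.2) *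
            (Matrix.of fun i j => deriv (fun s => S (s, p.2) i j) p.1)) :
    HasDerivAt (fun t =>
      ((Matrix.of fun i j => deriv (fun s => S (s, t) i j) p.1) *
        (Matrix.of fun i j => deriv (fun s => S (s, t) i j) p.1)).trace) 0 p.2 :=
  hasDerivAt_trace_mul_self_of_lax (sub_ne_zero.mpr hμ)
    (fun i j => hasDerivAt_deriv_prodMk_comm (hS i j) hk) heq

theorem stmt_4 (n : ℕ) (μ₁ μ₂ : ℝ) (hμ : μ₁ ≠ μ₂)
    (S : ℝ × ℝ → Matrix (Fin n) (Fin n) ℝ)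
    (hS : ∀ i j, ContDiff ℝ 2 fun p => S p i j)
    (heq : ∀ p : ℝ × ℝ,
      (μ₁ - μ₂) •
          (Matrix.of fun i j =>
            deriv (fun s => deriv (fun t => S (s, t) i j) p.2) p.1) =
        (Matrix.of fun i j => deriv (fun s => S (s, p.2) i j) p.1) *
            (Matrix.of fun i j => deriv (fun t => S (p.1, t) i j) p.2) -
          (Matrix.of fun i j => deriv (fun t => S (p.1, t) i j) p.2) *
            (Matrix.of fun i j => deriv (fun s => S (s, p.2) i j) p.1)) :
    ∀ p : ℝ × ℝ,
      deriv (fun t =>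
        (((Matrix.of fun i j => deriv (fun s => S (s, t) i j) p.1) *
            (Matrix.of fun i j => deriv (fun s => S (s, t) i j) p.1)).trace)) p.2
        = 0 :=
  fun p => (stmt_4_general (k := 2) (by simp) hμ (fun i j => (hS i j).contDiffAt) (heq p)).deriv
end

section
/- Let A, B : ℝ³ → ℝ be continuously differentiable and f : ℝ³ → ℝ be twice continuously differentiable, with coordinates (t, s, x). Define the first-order operators L₁f = ∂_t f − A·∂_x f and L₂f = ∂_s f − B·∂_x f. Then at every point, L₁(L₂ f) − L₂(L₁ f) = ( ∂_s A − ∂_t B + A·∂_x B − B·∂_x A ) · ∂_x f. In particular, if ∂_t B − ∂_s A = A·∂_x B − B·∂_x A then the operators L₁ and L₂ commute on all twice continuously differentiable f. -/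
/-- Partial derivative in the first coordinate `t` of `(t,s,x)`. -/
noncomputable def Dt (f : ℝ × ℝ × ℝ → ℝ) (p : ℝ × ℝ × ℝ) : ℝ :=
  deriv (fun t => f (t, p.2.1, p.2.2)) p.1

/-- Partial derivative in the second coordinate `s` of `(t,s,x)`. -/
noncomputable def Ds (f : ℝ × ℝ × ℝ → ℝ) (p : ℝ × ℝ × ℝ) : ℝ :=
  deriv (fun s => f (p.1, s, p.2.2)) p.2.1

/-- Partial derivative in the third coordinate `x` of `(t,s,x)`. -/
noncomputable def Dx (f : ℝ × ℝ × ℝ → ℝ) (p : ℝ × ℝ × ℝ) : ℝ :=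
  deriv (fun x => f (p.1, p.2.1, x)) p.2.2

/-!
The operators `L₁ = ∂_t - A ∂_x` and `L₂ = ∂_s - B ∂_x` are differentiation along vector fields
`X = ∂_t - A ∂_x` and `Y = ∂_s - B ∂_x`, so symmetry of second derivatives turns
`L₁ L₂ f - L₂ L₁ f` into the derivative of `f` along the Lie bracket `[X, Y]`. The vector fields
`∂_t`, `∂_s`, `∂_x` are constant, so only derivatives of `A` and `B` survive in the bracket:
`[X, Y] = (Y A - X B) ∂_x`.
-/

open Topology VectorField

section TransportField

variable {𝕜 E F : Type*} [NontriviallyNormedField 𝕜]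
  [NormedAddCommGroup E] [NormedSpace 𝕜 E] [NormedAddCommGroup F] [NormedSpace 𝕜 F]
  {A B : E → 𝕜} {f : E → F} {V : E → E} {p : E}

/-- The vector field `∂_u - A ∂_w`, for fixed directions `u` and `w`: the operator
`L_n = D_n - A_n D₀` of the hierarchy is differentiation along such a field. -/
def transportField (A : E → 𝕜) (u w : E) (q : E) : E :=
  u - A q • w

theorem differentiableAt_transportField (hA : DifferentiableAt 𝕜 A p) (u w : E) :
    DifferentiableAt 𝕜 (transportField A u w) p :=
  (hA.smul_const w).const_sub u

theorem fderiv_transportField_apply (hA : DifferentiableAt 𝕜 A p) (u w y : E) :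
    fderiv 𝕜 (transportField A u w) p y = -(fderiv 𝕜 A p y • w) := by
  have h : HasFDerivAt (transportField A u w) (-(fderiv 𝕜 A p).smulRight w) p :=
    (hA.hasFDerivAt.smul_const w).const_sub u
  rw [h.fderiv, neg_apply, ContinuousLinearMap.smulRight_apply]

theorem lieBracket_transportField (hA : DifferentiableAt 𝕜 A p) (hB : DifferentiableAt 𝕜 B p)
    (u v w : E) :
    lieBracket 𝕜 (transportField A u w) (transportField B v w) p =
      (fderiv 𝕜 A p (transportField B v w p) - fderiv 𝕜 B p (transportField A u w p)) • w := by
  rw [lieBracket, fderiv_transportField_apply hA, fderiv_transportField_apply hB, sub_smul]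
  abel

theorem differentiableAt_fderiv_apply (hf : ContDiffAt 𝕜 2 f p) (hV : DifferentiableAt 𝕜 V p) :
    DifferentiableAt 𝕜 (fun q => fderiv 𝕜 f q (V q)) p :=
  ((hf.fderiv_right (m := 1) one_add_one_eq_two.le).differentiableAt one_ne_zero).clm_apply hV

theorem fderiv_transportField_commutator {n : WithTop ℕ∞} (hA : DifferentiableAt 𝕜 A p)
    (hB : DifferentiableAt 𝕜 B p) (hf : ContDiffAt 𝕜 n f p) (hn : minSmoothness 𝕜 2 ≤ n)
    (u v w : E) :
    fderiv 𝕜 (fun q => fderiv 𝕜 f q (transportField B v w q)) p (transportField A u w p) -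
        fderiv 𝕜 (fun q => fderiv 𝕜 f q (transportField A u w q)) p (transportField B v w p) =
      (fderiv 𝕜 A p (transportField B v w p) - fderiv 𝕜 B p (transportField A u w p)) •
        fderiv 𝕜 f p w := by
  rw [← fderiv_apply_lieBracket hf hn (differentiableAt_transportField hB v w)
    (differentiableAt_transportField hA u w), lieBracket_transportField hA hB, map_smul]

end TransportField

section Coordinates

variable {A B f : ℝ × ℝ × ℝ → ℝ} {p : ℝ × ℝ × ℝ}

theorem Dt_eq_fderiv (hf : DifferentiableAt ℝ f p) : Dt f p = fderiv ℝ f p (1, 0, 0) :=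
  (hf.hasFDerivAt.comp_hasDerivAt p.1
    ((hasDerivAt_id p.1).prodMk ((hasDerivAt_const _ _).prodMk (hasDerivAt_const _ _)))).deriv

theorem Ds_eq_fderiv (hf : DifferentiableAt ℝ f p) : Ds f p = fderiv ℝ f p (0, 1, 0) :=
  (hf.hasFDerivAt.comp_hasDerivAt p.2.1
    ((hasDerivAt_const _ _).prodMk ((hasDerivAt_id p.2.1).prodMk (hasDerivAt_const _ _)))).deriv

theorem Dx_eq_fderiv (hf : DifferentiableAt ℝ f p) : Dx f p = fderiv ℝ f p (0, 0, 1) :=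
  (hf.hasFDerivAt.comp_hasDerivAt p.2.2
    ((hasDerivAt_const _ _).prodMk ((hasDerivAt_const _ _).prodMk (hasDerivAt_id p.2.2)))).deriv

theorem Dt_sub_mul_Dx_eq_fderiv (A : ℝ × ℝ × ℝ → ℝ) (hf : DifferentiableAt ℝ f p) :
    Dt f p - A p * Dx f p = fderiv ℝ f p (transportField A (1, 0, 0) (0, 0, 1) p) := by
  rw [Dt_eq_fderiv hf, Dx_eq_fderiv hf, transportField, map_sub, map_smul, smul_eq_mul]

theorem Ds_sub_mul_Dx_eq_fderiv (B : ℝ × ℝ × ℝ → ℝ) (hf : DifferentiableAt ℝ f p) :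
    Ds f p - B p * Dx f p = fderiv ℝ f p (transportField B (0, 1, 0) (0, 0, 1) p) := by
  rw [Ds_eq_fderiv hf, Dx_eq_fderiv hf, transportField, map_sub, map_smul, smul_eq_mul]

theorem stmt_5_general (hA : DifferentiableAt ℝ A p) (hB : DifferentiableAt ℝ B p)
    (hf : ContDiffAt ℝ 2 f p) :
    (Dt (fun q => Ds f q - B q * Dx f q) p - A p * Dx (fun q => Ds f q - B q * Dx f q) p) -
        (Ds (fun q => Dt f q - A q * Dx f q) p - B p * Dx (fun q => Dt f q - A q * Dx f q) p) =
      (Ds A p - Dt B p + A p * Dx B p - B p * Dx A p) * Dx f p := by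
  let X := transportField A (1, 0, 0) (0, 0, 1)
  let Y := transportField B (0, 1, 0) (0, 0, 1)
  have differentiable_near : ∀ᶠ q in 𝓝 p, DifferentiableAt ℝ f q :=
    (hf.eventually (by simp)).mono fun _ hq => hq.differentiableAt two_ne_zero
  have L₁f_eq : (fun q => Dt f q - A q * Dx f q) =ᶠ[𝓝 p] fun q => fderiv ℝ f q (X q) :=
    differentiable_near.mono fun _ hq => Dt_sub_mul_Dx_eq_fderiv A hq
  have L₂f_eq : (fun q => Ds f q - B q * Dx f q) =ᶠ[𝓝 p] fun q => fderiv ℝ f q (Y q) :=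
    differentiable_near.mono fun _ hq => Ds_sub_mul_Dx_eq_fderiv B hq
  have L₁f_diff : DifferentiableAt ℝ (fun q => Dt f q - A q * Dx f q) p :=
    (differentiableAt_fderiv_apply hf
      (differentiableAt_transportField hA _ _)).congr_of_eventuallyEq L₁f_eq
  have L₂f_diff : DifferentiableAt ℝ (fun q => Ds f q - B q * Dx f q) p :=
    (differentiableAt_fderiv_apply hf
      (differentiableAt_transportField hB _ _)).congr_of_eventuallyEq L₂f_eq
  rw [Dt_sub_mul_Dx_eq_fderiv A L₂f_diff, Ds_sub_mul_Dx_eq_fderiv B L₁f_diff,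
    L₂f_eq.fderiv_eq, L₁f_eq.fderiv_eq, fderiv_transportField_commutator hA hB hf (by simp),
    ← Ds_sub_mul_Dx_eq_fderiv B hA, ← Dt_sub_mul_Dx_eq_fderiv A hB,
    ← Dx_eq_fderiv (hf.differentiableAt two_ne_zero), smul_eq_mul]
  ring

end Coordinates

theorem stmt_5 (A B : ℝ × ℝ × ℝ → ℝ) (hA : ContDiff ℝ 1 A) (hB : ContDiff ℝ 1 B)
    (f : ℝ × ℝ × ℝ → ℝ) (hf : ContDiff ℝ 2 f) :
    (∀ p : ℝ × ℝ × ℝ,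
      (Dt (fun q => Ds f q - B q * Dx f q) p -
          A p * Dx (fun q => Ds f q - B q * Dx f q) p) -
        (Ds (fun q => Dt f q - A q * Dx f q) p -
          B p * Dx (fun q => Dt f q - A q * Dx f q) p) =
      (Ds A p - Dt B p + A p * Dx B p - B p * Dx A p) * Dx f p) ∧
    ((∀ p : ℝ × ℝ × ℝ, Dt B p - Ds A p = A p * Dx B p - B p * Dx A p) →
      ∀ g : ℝ × ℝ × ℝ → ℝ, ContDiff ℝ 2 g →
        ∀ p : ℝ × ℝ × ℝ,
          Dt (fun q => Ds g q - B q * Dx g q) p -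
              A p * Dx (fun q => Ds g q - B q * Dx g q) p =
            Ds (fun q => Dt g q - A q * Dx g q) p -
              B p * Dx (fun q => Dt g q - A q * Dx g q) p) := by
  have commutator {g} (hg : ContDiff ℝ 2 g) (p) := stmt_5_general
    (hA.differentiable one_ne_zero p) (hB.differentiable one_ne_zero p) hg.contDiffAt
  exact ⟨commutator hf, fun h g hg p => by linear_combination commutator hg p - h p * Dx g p⟩
end
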